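/- Let μ and ν be Borel probability measures on ℝ with quantile functions Q_μ, Q_ν. Then the extended-real integral ∫⁻_{q ∈ (0,1)} ENNReal.ofReal( max( Q_ν(q) − Q_μ(q), 0 ) ) dq (with respect to Lebesgue measure on (0,1)) equals the infimum over all couplings γ of μ and ν of ∫⁻_{(x,y) ∈ ℝ×ℝ} ENNReal.ofReal( max(y − x, 0) ) dγ, and this infimum is attained by some coupling. In other words, the first-order stochastic dominance (FSD) violation of μ relative to ν coincides with the optimal transport cost between μ and ν under the asymmetric convex cost c(x,y) = (y − x)_+. -/

import Mathlib

/-!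
Since `(y - x)_+` is the length of `[x, y)`, Tonelli's theorem turns the cost of any measure `γ` on
the plane into `∫ γ {x ≤ t < y} dt` (`lintegral_cost_eq`). When `γ` couples `μ` and `ν`, the event
`{x ≤ t < y}` contains `{x ≤ t} \ {y ≤ t}`, so its mass is at least `F_μ(t) - F_ν(t)`, truncated at
zero. The comonotone coupling, the law of `(Q_μ(U), Q_ν(U))` with `U` uniform on `(0, 1)`, attains
this bound for every `t`: by the Galois connection `Q(q) ≤ t ↔ q ≤ F(t)` (`quantileFn_le_iff`), its
mass on `{x ≤ t < y}` is the length of `(F_ν(t), F_μ(t)]`. Its cost is the quantile integral.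
-/

open MeasureTheory Set
open scoped ENNReal

/-- The cumulative distribution function of a Borel measure on ℝ:
`F_μ(x) = μ((-∞, x])`. -/
noncomputable def cdfFn (μ : Measure ℝ) (x : ℝ) : ℝ := (μ (Iic x)).toReal

/-- The quantile function (generalized inverse of the CDF):
`Q_μ(p) = sInf { x | p ≤ F_μ(x) }`. -/
noncomputable def quantileFn (μ : Measure ℝ) (p : ℝ) : ℝ := sInf { x : ℝ | p ≤ cdfFn μ x }

open ProbabilityTheory Filter Topology

lemma cdfFn_eq_cdf (μ : Measure ℝ) [IsProbabilityMeasure μ] (x : ℝ) : cdfFn μ x = cdf μ x :=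
  (cdf_eq_real μ x).symm

lemma ofReal_cdfFn (μ : Measure ℝ) [IsProbabilityMeasure μ] (x : ℝ) :
    ENNReal.ofReal (cdfFn μ x) = μ (Iic x) := by
  rw [cdfFn_eq_cdf, ofReal_cdf]

lemma cdfFn_mem_Icc (μ : Measure ℝ) [IsProbabilityMeasure μ] (x : ℝ) :
    cdfFn μ x ∈ Icc (0 : ℝ) 1 := by
  rw [cdfFn_eq_cdf]
  exact ⟨cdf_nonneg μ x, cdf_le_one μ x⟩

lemma bddBelow_quantile_set (μ : Measure ℝ) [IsProbabilityMeasure μ] {q : ℝ} (hq : 0 < q) :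
    BddBelow {x : ℝ | q ≤ cdfFn μ x} := by
  obtain ⟨b, hb⟩ := ((tendsto_cdf_atBot μ).eventually (gt_mem_nhds hq)).exists
  refine ⟨b, fun x hx => ?_⟩
  by_contra! h
  have h1 : q ≤ cdf μ x := by simpa only [mem_ofPred_eq, cdfFn_eq_cdf] using hx
  linarith [monotone_cdf μ h.le]

lemma quantile_set_nonempty (μ : Measure ℝ) [IsProbabilityMeasure μ] {q : ℝ} (hq : q < 1) :
    {x : ℝ | q ≤ cdfFn μ x}.Nonempty := by
  obtain ⟨b, hb⟩ := ((tendsto_cdf_atTop μ).eventually (lt_mem_nhds hq)).exists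
  exact ⟨b, by simpa only [mem_ofPred_eq, cdfFn_eq_cdf] using hb.le⟩

/-- The Galois connection between quantile function and CDF; right-continuity of the CDF gives the
forward direction. -/
lemma quantileFn_le_iff (μ : Measure ℝ) [IsProbabilityMeasure μ] {q : ℝ} (hq : q ∈ Ioo (0 : ℝ) 1)
    (t : ℝ) : quantileFn μ q ≤ t ↔ q ≤ cdfFn μ t := by
  refine ⟨fun h => ?_, fun h => csInf_le (bddBelow_quantile_set μ hq.1) h⟩
  have key : ∀ s ∈ Ioi t, q ≤ cdf μ s := by
    intro s hs
    obtain ⟨x, hx, hxs⟩ := exists_lt_of_csInf_lt (quantile_set_nonempty μ hq.2)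
      (lt_of_le_of_lt h hs)
    have h1 : q ≤ cdf μ x := by simpa only [mem_ofPred_eq, cdfFn_eq_cdf] using hx
    exact h1.trans (monotone_cdf μ hxs.le)
  rw [cdfFn_eq_cdf]
  have hc : Tendsto (cdf μ) (𝓝[>] t) (𝓝 (cdf μ t)) :=
    ((cdf μ).right_continuous t).mono_left (nhdsWithin_mono _ Ioi_subset_Ici_self)
  exact ge_of_tendsto hc (eventually_nhdsWithin_of_forall key)

lemma aemeasurable_quantileFn (μ : Measure ℝ) [IsProbabilityMeasure μ] :
    AEMeasurable (quantileFn μ) (volume.restrict (Ioo (0 : ℝ) 1)) := by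
  refine aemeasurable_restrict_of_monotoneOn measurableSet_Ioo fun p hp q hq hpq => ?_
  rw [quantileFn_le_iff μ hp]
  exact hpq.trans ((quantileFn_le_iff μ hq _).1 le_rfl)

lemma volume_restrict_Ioc {a b : ℝ} (hb : 0 ≤ b) (ha : a ≤ 1) :
    volume.restrict (Ioo (0 : ℝ) 1) (Ioc b a) = ENNReal.ofReal (a - b) := by
  rw [Measure.restrict_congr_set Ioo_ae_eq_Ioc, Measure.restrict_apply measurableSet_Ioc,
    Ioc_inter_Ioc, max_eq_left hb, min_eq_left ha, Real.volume_Ioc]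

/-- The quantile transform: a uniform variable on `(0, 1)` is sent by `Q_μ` to one with law `μ`. -/
lemma map_quantileFn (μ : Measure ℝ) [IsProbabilityMeasure μ] :
    (volume.restrict (Ioo (0 : ℝ) 1)).map (quantileFn μ) = μ := by
  have : IsFiniteMeasure ((volume.restrict (Ioo (0 : ℝ) 1)).map (quantileFn μ)) := inferInstance
  refine Measure.ext_of_Iic _ _ fun t => ?_
  rw [Measure.map_apply_of_aemeasurable (aemeasurable_quantileFn μ) measurableSet_Iic,
    ← ofReal_cdfFn, ← sub_zero (cdfFn μ t),
    ← volume_restrict_Ioc le_rfl (cdfFn_mem_Icc μ t).2]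
  refine measure_congr ?_
  filter_upwards [ae_restrict_mem measurableSet_Ioo] with q hq
  refine propext ?_
  change quantileFn μ q ≤ t ↔ 0 < q ∧ q ≤ cdfFn μ t
  rw [quantileFn_le_iff μ hq]
  exact ⟨fun h => ⟨hq.1, h⟩, fun h => h.2⟩

/-- Layer-cake formula for the cost `(y - x)_+`. -/
lemma lintegral_cost_eq (γ : Measure (ℝ × ℝ)) [SFinite γ] :
    ∫⁻ p, ENNReal.ofReal (max (p.2 - p.1) 0) ∂γ = ∫⁻ t : ℝ, γ {p | p.1 ≤ t ∧ t < p.2} := by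
  have hS : MeasurableSet {z : (ℝ × ℝ) × ℝ | z.1.1 ≤ z.2 ∧ z.2 < z.1.2} :=
    (measurableSet_le measurable_fst.fst measurable_snd).inter
      (measurableSet_lt measurable_snd measurable_fst.snd)
  have h1 := Measure.prod_apply (μ := γ) (ν := (volume : Measure ℝ)) hS
  have h2 := Measure.prod_apply_symm (μ := γ) (ν := (volume : Measure ℝ)) hS
  rw [h1] at h2
  refine Eq.trans (lintegral_congr fun p => ?_) h2
  change _ = volume (Ico p.1 p.2)
  rw [Real.volume_Ico, ENNReal.ofReal_max, ENNReal.ofReal_zero, max_eq_left zero_le]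

theorem fsd_violation_is_least_asymmetric_transport_cost
    (μ ν : Measure ℝ) [IsProbabilityMeasure μ] [IsProbabilityMeasure ν] :
    IsLeast
      { r : ℝ≥0∞ | ∃ γ : Measure (ℝ × ℝ), IsProbabilityMeasure γ ∧
          γ.map Prod.fst = μ ∧ γ.map Prod.snd = ν ∧
          r = ∫⁻ p, ENNReal.ofReal (max (p.2 - p.1) 0) ∂γ }
      (∫⁻ q in Ioo (0:ℝ) 1,
        ENNReal.ofReal (max (quantileFn ν q - quantileFn μ q) 0)) := by
  set lam := volume.restrict (Ioo (0 : ℝ) 1) with hlam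
  have hμ := aemeasurable_quantileFn μ
  have hν := aemeasurable_quantileFn ν
  have hpair : AEMeasurable (fun q => (quantileFn μ q, quantileFn ν q)) lam := hμ.prodMk hν
  have : IsProbabilityMeasure lam := ⟨by simp [hlam]⟩
  have hcost : ∫⁻ q, ENNReal.ofReal (max (quantileFn ν q - quantileFn μ q) 0) ∂lam
      = ∫⁻ p, ENNReal.ofReal (max (p.2 - p.1) 0)
          ∂(lam.map fun q => (quantileFn μ q, quantileFn ν q)) :=
    (lintegral_map' (f := fun p : ℝ × ℝ => ENNReal.ofReal (max (p.2 - p.1) 0))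
      (by fun_prop) hpair).symm
  have hprob := Measure.isProbabilityMeasure_map hpair
  refine ⟨⟨lam.map fun q => (quantileFn μ q, quantileFn ν q), hprob, ?_, ?_, hcost⟩, ?_⟩
  · rw [AEMeasurable.map_map_of_aemeasurable measurable_fst.aemeasurable hpair]
    exact map_quantileFn μ
  · rw [AEMeasurable.map_map_of_aemeasurable measurable_snd.aemeasurable hpair]
    exact map_quantileFn ν
  · rintro r ⟨γ, hγ, h1, h2, rfl⟩
    rw [hcost, lintegral_cost_eq, lintegral_cost_eq]
    refine lintegral_mono fun t => ?_
    have hS : MeasurableSet {p : ℝ × ℝ | p.1 ≤ t ∧ t < p.2} :=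
      (measurableSet_le measurable_fst measurable_const).inter
        (measurableSet_lt measurable_const measurable_snd)
    have hopt : (lam.map fun q => (quantileFn μ q, quantileFn ν q))
        {p : ℝ × ℝ | p.1 ≤ t ∧ t < p.2} = μ (Iic t) - ν (Iic t) := by
      rw [Measure.map_apply_of_aemeasurable hpair hS, ← ofReal_cdfFn μ, ← ofReal_cdfFn ν,
        ← ENNReal.ofReal_sub _ (cdfFn_mem_Icc ν t).1,
        ← volume_restrict_Ioc (cdfFn_mem_Icc ν t).1 (cdfFn_mem_Icc μ t).2]
      refine measure_congr ?_
      filter_upwards [ae_restrict_mem measurableSet_Ioo] with q hq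
      refine propext ?_
      change quantileFn μ q ≤ t ∧ t < quantileFn ν q ↔ cdfFn ν t < q ∧ q ≤ cdfFn μ t
      rw [quantileFn_le_iff μ hq, ← not_le, quantileFn_le_iff ν hq, not_le, and_comm]
    rw [hopt, ← h1, ← h2, Measure.map_apply measurable_fst measurableSet_Iic,
      Measure.map_apply measurable_snd measurableSet_Iic]
    refine le_measure_sdiff.trans (measure_mono fun p hp => ?_)
    exact ⟨hp.1, not_le.1 hp.2⟩
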